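/- arXiv:2101.08225 — 2 statements merged into one kernel-verified Lean document; each statement's English description precedes it below -/
import Mathlib

section
/- Let Γ₁ and Γ₂ be finite simple graphs, each having at least two vertices, such that the outer automorphism groups Out(A_{Γ₁}) and Out(A_{Γ₂}) are finite. Let Γ = Γ₁ ⊔ Γ₂ be the disjoint union of the two graphs. Then Out(A_Γ) has a finite-index subgroup isomorphic to the direct product A_{Γ₁} × A_{Γ₂}. -/
open scoped commutatorElement

/-- The set of relators of a right-angled Artin group: commutators of adjacent vertices. -/
def raagRels {V : Type*} (Γ : SimpleGraph V) : Set (FreeGroup V) :=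
  {r | ∃ v w : V, Γ.Adj v w ∧ r = ⁅FreeGroup.of v, FreeGroup.of w⁆}

/-- The right-angled Artin group of a simple graph. -/
abbrev RAAG {V : Type*} (Γ : SimpleGraph V) : Type _ := PresentedGroup (raagRels Γ)

instance conjRangeNormal (G : Type*) [Group G] :
    ((MulAut.conj : G →* MulAut G).range).Normal := by
  constructor
  rintro - ⟨g, rfl⟩ φ
  refine ⟨φ g, ?_⟩
  ext x
  simp [MulAut.conj_apply, mul_assoc]

/-- The outer automorphism group of a group: the quotient of the automorphism group
by the inner automorphisms. -/
def Out (G : Type*) [Group G] : Type _ :=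
  MulAut G ⧸ (MulAut.conj : G →* MulAut G).range

instance (G : Type*) [Group G] : Group (Out G) :=
  QuotientGroup.Quotient.group _

/-- Disjoint union of two simple graphs. -/
def graphSum {V₁ V₂ : Type*} (Γ₁ : SimpleGraph V₁) (Γ₂ : SimpleGraph V₂) :
    SimpleGraph (V₁ ⊕ V₂) where
  Adj x y :=
    match x, y with
    | .inl a, .inl b => Γ₁.Adj a b
    | .inr a, .inr b => Γ₂.Adj a b
    | _, _ => False
  symm := by constructor; rintro (a | a) (b | b) h <;> simp_all <;> exact h.symm
  loopless := by constructor; rintro (a | a) h <;> simp_all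

/-!
A right-angled Artin group with finite outer automorphism group has no transvections and no
nontrivial partial conjugations, since these have infinite order in `Out`. Hence its graph is
connected, and as no vertex is joined to all the others, its centre is trivial.

In a free product, commuting nontrivial elements either lie in a common conjugate of a factor or
have a common power. The second alternative is impossible for distinct generators of a right-angled
Artin group, so by connectedness an embedded `A_Γᵢ` lies in a conjugate of a factor. Automorphisms
of `A_Γ₁ * A_Γ₂` therefore permute the conjugacy classes of the two factors. An automorphism fixing
both classes restricts, up to an inner automorphism, to both factors at once: otherwise composing
with factor automorphisms gives a map that fixes one factor and conjugates the other by a nontrivial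
reduced word, and such a map is not surjective. As `Out(A_Γᵢ)` is finite, the outer classes that
restrict to inner automorphisms of both factors still have finite index. Sending a pair `(g₁, g₂)`
to the automorphism that conjugates the `i`-th factor by `gᵢ` is injective modulo inner
automorphisms, because the factors are malnormal and centreless.
-/

section GroupTheory

open scoped Pointwise

variable {G H : Type*} [Group G] [Group H]

theorem finiteIndex_map (f : G →* H) (K : Subgroup G) [K.FiniteIndex] [f.range.FiniteIndex] :
    (K.map f).FiniteIndex := by
  have hsup : (K ⊔ f.ker).FiniteIndex := Subgroup.finiteIndex_of_le le_sup_left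
  rw [Subgroup.finiteIndex_iff, Subgroup.index_map]
  exact mul_ne_zero hsup.index_ne_zero Subgroup.FiniteIndex.index_ne_zero

theorem smul_conj_smul (φ : MulAut G) (g : G) (K : Subgroup G) :
    φ • MulAut.conj g • K = MulAut.conj (φ g) • φ • K := by
  simp_rw [← mul_smul]
  congr 1
  ext x
  simp

theorem exists_mulAut_of_smul_range_eq {f : H →* G} (hf : Function.Injective f) {φ : MulAut G}
    (h : φ • f.range = f.range) : ∃ α : MulAut H, ∀ x, φ (f x) = f (α x) := by
  let e := MonoidHom.ofInjective hf
  let φ' : f.range ≃* f.range := (φ.subgroupMap f.range).trans (MulEquiv.subgroupCongr h)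
  refine ⟨e.trans (φ'.trans e.symm), fun x ↦ ?_⟩
  exact (MonoidHom.apply_ofInjective_symm hf (φ' (e x))).symm

end GroupTheory

namespace Out

variable {G H : Type*} [Group G] [Group H]

/-- The outer class of an automorphism. -/
def mk : MulAut G →* Out G :=
  QuotientGroup.mk' _

theorem mk_surjective : Function.Surjective (mk : MulAut G →* Out G) :=
  QuotientGroup.mk'_surjective _

theorem mk_eq_one_iff {φ : MulAut G} : mk φ = 1 ↔ ∃ g, MulAut.conj g = φ :=
  QuotientGroup.eq_one_iff _

theorem mk_conj (g : G) : mk (MulAut.conj g) = 1 :=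
  mk_eq_one_iff.2 ⟨g, rfl⟩

theorem exists_conj_eq_pow [Finite (Out G)] (φ : MulAut G) :
    ∃ n > 0, ∃ g, MulAut.conj g = φ ^ n :=
  ⟨orderOf (mk φ), orderOf_pos _, mk_eq_one_iff.1 (by rw [map_pow, pow_orderOf_eq_one])⟩

theorem exists_eq_conj_of_map_add [Finite (Out G)] (T : ℤ → G →* G) (hzero : T 0 = .id G)
    (hadd : ∀ m n, T (m + n) = (T m).comp (T n)) :
    ∃ n : ℕ, 0 < n ∧ ∃ g, ∀ x, T n x = g * x * g⁻¹ := by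
  let φ : MulAut G := MonoidHom.toMulEquiv (T 1) (T (-1))
    (by rw [← hadd, neg_add_cancel, hzero]) (by rw [← hadd, add_neg_cancel, hzero])
  have hφ (n : ℕ) (x : G) : (φ ^ n) x = T n x := by
    induction n generalizing x with
    | zero => simp [hzero]
    | succ n ih => rw [pow_succ, MulAut.mul_apply, ih, Nat.cast_succ, hadd]; rfl
  obtain ⟨n, hn, g, hg⟩ := exists_conj_eq_pow φ
  exact ⟨n, hn, g, fun x ↦ by rw [← hφ, ← hg, MulAut.conj_apply]⟩

/-- Isomorphic groups have isomorphic outer automorphism groups. -/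
def congr (e : G ≃* H) : Out G ≃* Out H :=
  QuotientGroup.congr _ _ (MulAut.congr e) <| by
    rw [← MonoidHom.range_comp]
    have hconj : ((MulAut.congr e : MulAut G →* MulAut H).comp MulAut.conj) =
        MulAut.conj.comp (e : G →* H) := by
      ext g x
      simp [MulAut.congr]
    rw [hconj, MonoidHom.range_comp, MonoidHom.range_eq_top.2 e.surjective,
      ← MonoidHom.range_eq_map]

variable {ι : Type*} {M : ι → Type*} [∀ i, Group (M i)]

variable (M) in
/-- The homomorphism sending a family of group elements to the family of their conjugations. -/
def piConj : (∀ i, M i) →* ∀ i, MulAut (M i) :=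
  MonoidHom.piMap fun _ ↦ MulAut.conj

theorem finiteIndex_range_piConj [Finite ι] [∀ i, Finite (Out (M i))] :
    (piConj M).range.FiniteIndex := by
  let toOut : (∀ i, MulAut (M i)) →* ∀ i, Out (M i) := MonoidHom.piMap fun _ ↦ mk
  refine Subgroup.finiteIndex_of_le (H := toOut.ker) fun α hα ↦ ?_
  choose m hm using fun i ↦ mk_eq_one_iff.1 (congrFun hα i)
  exact ⟨m, funext hm⟩

end Out

namespace FreeProd

open Monoid CoprodI
open scoped Pointwise

variable {ι : Type*} {M : ι → Type*} [∀ i, Group (M i)]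

section NormalForm

variable {i j k l : ι}

theorem toList_eq_iff_prod_eq {w : NeWord M i j} {w' : NeWord M k l} :
    w.toList = w'.toList ↔ w.prod = w'.prod := by
  classical
  exact Word.ext_iff.symm.trans
    (Word.equiv.symm.injective.eq_iff (a := w.toWord) (b := w'.toWord)).symm

theorem exists_neWord_prod_eq {g : CoprodI M} (hg : g ≠ 1) :
    ∃ (i j : ι) (w : NeWord M i j), w.prod = g := by
  classical
  have hprod : (Word.equiv g).prod = g := Word.equiv.symm_apply_apply g
  have hne : Word.equiv g ≠ Word.empty := by
    intro h
    rw [h, Word.prod_empty] at hprod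
    exact hg hprod.symm
  obtain ⟨i, j, w, hw⟩ := NeWord.of_word _ hne
  exact ⟨i, j, w, by rw [NeWord.prod, hw, hprod]⟩

theorem length_toList_pos (w : NeWord M i j) : 0 < w.toList.length :=
  List.length_pos_of_ne_nil w.toList_ne_nil

theorem prod_eq_prod_map_toList (w : NeWord M i j) :
    w.prod = (w.toList.map fun x ↦ of x.2).prod :=
  rfl

theorem toList_eq_head_cons (w : NeWord M i j) :
    (i = j ∧ w.toList = [⟨i, w.head⟩]) ∨
      ∃ k, i ≠ k ∧ ∃ w' : NeWord M k j, w.toList = ⟨i, w.head⟩ :: w'.toList := by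
  induction w with
  | singleton => exact .inl ⟨rfl, rfl⟩
  | append w₁ h w₂ ih₁ _ =>
    right
    rcases ih₁ with ⟨rfl, hw₁⟩ | ⟨k, hk, w', hw₁⟩
    · exact ⟨_, h, w₂, by simp [NeWord.toList, hw₁]⟩
    · exact ⟨k, hk, w'.append h w₂, by simp [NeWord.toList, hw₁]⟩

theorem toList_eq_concat_last (w : NeWord M i j) :
    (i = j ∧ w.toList = [⟨j, w.last⟩]) ∨
      ∃ k, k ≠ j ∧ ∃ w' : NeWord M i k, w.toList = w'.toList ++ [⟨j, w.last⟩] := by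
  induction w with
  | singleton => exact .inl ⟨rfl, rfl⟩
  | append w₁ h w₂ _ ih₂ =>
    right
    rcases ih₂ with ⟨rfl, hw₂⟩ | ⟨k, hk, w', hw₂⟩
    · exact ⟨_, h, w₁, by simp [NeWord.toList, hw₂]⟩
    · exact ⟨k, hk, w₁.append h w', by simp [NeWord.toList, hw₂]⟩

theorem exists_eq_mul_of (i : ι) (g : CoprodI M) : ∃ (g' : CoprodI M) (a : M i), g = g' * of a ∧
    (g' = 1 ∨ ∃ k l, l ≠ i ∧ ∃ w : NeWord M k l, w.prod = g') := by
  rcases eq_or_ne g 1 with rfl | hg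
  · exact ⟨1, 1, by simp, .inl rfl⟩
  obtain ⟨k, l, w, rfl⟩ := exists_neWord_prod_eq hg
  rcases eq_or_ne l i with rfl | hl
  · rcases toList_eq_concat_last w with ⟨-, hw⟩ | ⟨l', hl', w', hw⟩
    · exact ⟨1, w.last, by simp [prod_eq_prod_map_toList, hw], .inl rfl⟩
    · exact ⟨w'.prod, w.last, by simp [prod_eq_prod_map_toList, hw], .inr ⟨k, l', hl', w', rfl⟩⟩
  · exact ⟨w.prod, 1, by simp, .inr ⟨k, l, hl, w, rfl⟩⟩

end NormalForm

section Factors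

variable (M) in
/-- The `i`-th free factor of a free product, as a subgroup. -/
def factor (i : ι) : Subgroup (CoprodI M) :=
  (of : M i →* CoprodI M).range

/-- An element of a free product is elliptic if it lies in a conjugate of a free factor,
equivalently if it fixes a vertex of the Bass–Serre tree. -/
def IsElliptic (x : CoprodI M) : Prop :=
  ∃ (g : CoprodI M) (i : ι), x ∈ MulAut.conj g • factor M i

variable {i j : ι}

theorem of_mem_factor (m : M i) : of m ∈ factor M i :=
  ⟨m, rfl⟩

theorem mem_conj_smul_factor {g x : CoprodI M} :
    x ∈ MulAut.conj g • factor M i ↔ ∃ m : M i, g * of m * g⁻¹ = x := by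
  simp [Subgroup.mem_smul_pointwise_iff_exists, factor]

theorem IsElliptic.conj {x : CoprodI M} (hx : IsElliptic x) (h : CoprodI M) :
    IsElliptic (h * x * h⁻¹) := by
  obtain ⟨g, i, hx⟩ := hx
  refine ⟨h * g, i, ?_⟩
  rw [map_mul, mul_smul]
  exact Subgroup.smul_mem_pointwise_smul x (MulAut.conj h) _ hx

theorem eq_of_of_eq_of {m : M i} {n : M j} (hm : m ≠ 1) (h : (of m : CoprodI M) = of n) :
    i = j := by
  have hn : n ≠ 1 := by
    rintro rfl
    exact hm (of_injective i (by rw [h, map_one, map_one]))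
  have hlist : (NeWord.singleton m hm).toList = (NeWord.singleton n hn).toList :=
    toList_eq_iff_prod_eq.2 (by simpa using h)
  exact congrArg Sigma.fst (List.singleton_injective hlist)

theorem factor_inf_factor (hij : i ≠ j) : factor M i ⊓ factor M j = ⊥ := by
  rw [eq_bot_iff]
  rintro _ ⟨⟨m, rfl⟩, n, hmn⟩
  by_contra hm
  exact hij (eq_of_of_eq_of (fun h ↦ hm (by simp [h])) hmn.symm)

-- If `g` does not end in the factor `i`, then `g m g⁻¹` is a reduced word of length at least `3`.
theorem eq_and_mem_factor_of_conj_of_eq_of {m : M i} {n : M j} (hm : m ≠ 1) {g : CoprodI M}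
    (h : g * of m * g⁻¹ = of n) : i = j ∧ g ∈ factor M i := by
  obtain ⟨g', a, rfl, hg'⟩ := exists_eq_mul_of i g
  have hm' : a * m * a⁻¹ ≠ 1 := by simpa using hm
  have hconj : g' * of (a * m * a⁻¹) * g'⁻¹ = of n := by
    rw [← h]
    simp [mul_assoc]
  rcases hg' with rfl | ⟨k, l, hl, w, rfl⟩
  · exact ⟨eq_of_of_eq_of hm' (by simpa using hconj), by simpa using of_mem_factor a⟩
  · exfalso
    have hn : n ≠ 1 := by
      rintro rfl
      rw [map_one, conj_eq_one_iff] at hconj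
      exact hm' (of_injective i (by rw [hconj, map_one]))
    have hlist : ((w.append hl (.singleton _ hm')).append hl.symm w.inv).toList =
        (NeWord.singleton n hn).toList :=
      toList_eq_iff_prod_eq.2 (by simpa [mul_assoc] using hconj)
    have hlen := congrArg List.length hlist
    have := length_toList_pos w
    simp only [NeWord.toList, List.length_append, List.length_singleton] at hlen
    omega

theorem eq_of_mem_conj_smul_factor {x g h : CoprodI M} (hx : x ≠ 1)
    (hg : x ∈ MulAut.conj g • factor M i) (hh : x ∈ MulAut.conj h • factor M j) : i = j := by
  obtain ⟨m, rfl⟩ := mem_conj_smul_factor.1 hg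
  obtain ⟨n, hn⟩ := mem_conj_smul_factor.1 hh
  have hm : m ≠ 1 := by
    rintro rfl
    simp at hx
  refine (eq_and_mem_factor_of_conj_of_eq_of (g := h⁻¹ * g) (n := n) hm ?_).1
  rw [eq_comm, ← mul_right_inj h, ← mul_left_inj h⁻¹, hn]
  group

theorem mem_conj_smul_factor_of_commute {g x y : CoprodI M}
    (hx : x ∈ MulAut.conj g • factor M i) (hx1 : x ≠ 1) (hxy : Commute x y) :
    y ∈ MulAut.conj g • factor M i := by
  obtain ⟨m, rfl⟩ := mem_conj_smul_factor.1 hx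
  have hm : m ≠ 1 := by
    rintro rfl
    simp at hx1
  have hcomm : Commute (of m) (g⁻¹ * y * g) := by
    simpa [mul_assoc] using hxy.map (MulAut.conj g⁻¹)
  have hmem := (eq_and_mem_factor_of_conj_of_eq_of (g := g⁻¹ * y * g) (n := m) hm
    (by rw [← hcomm.eq, mul_inv_cancel_right])).2
  simpa [Subgroup.mem_pointwise_smul_iff_inv_smul_mem, ← map_inv] using hmem

end Factors

section Commuting

variable {i j k l : ι}

theorem isElliptic_or_exists_conj_neWord_eq (w : NeWord M i j) :
    IsElliptic w.prod ∨
      ∃ (g : CoprodI M) (k l : ι) (_ : k ≠ l) (w' : NeWord M k l), g * w'.prod * g⁻¹ = w.prod := by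
  induction hn : w.toList.length using Nat.strong_induction_on generalizing i j with
  | _ n ih =>
  rcases ne_or_eq i j with hij | rfl
  · exact .inr ⟨1, i, j, hij, w, by simp⟩
  rcases toList_eq_head_cons w with ⟨-, hw⟩ | ⟨k, hk, w', hw⟩
  · exact .inl ⟨1, i, by simpa [prod_eq_prod_map_toList, hw] using of_mem_factor w.head⟩
  rcases toList_eq_concat_last w' with ⟨hki, -⟩ | ⟨l, hl, core, hw'⟩
  · exact absurd hki.symm hk
  have hprod : w.prod =
      of w.head * (core.prod * of (w'.last * w.head)) * (of w.head)⁻¹ := by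
    simp [prod_eq_prod_map_toList, hw, hw', mul_assoc]
  by_cases hcancel : w'.last * w.head = 1
  · rw [hcancel, map_one, mul_one] at hprod
    have hlen : core.toList.length < n := by
      simp only [← hn, hw, hw', List.length_cons, List.length_append]
      omega
    rw [hprod]
    refine (ih _ hlen core rfl).imp (fun h ↦ h.conj _) ?_
    rintro ⟨g, k', l', hkl, v, hv⟩
    exact ⟨of w.head * g, k', l', hkl, v, by simp [← hv, mul_assoc]⟩
  · exact .inr ⟨of w.head, k, i, hk.symm, core.append hl (.singleton _ hcancel), by simp [hprod]⟩

theorem exists_neWord_prod_eq_pow (hij : i ≠ j) (w : NeWord M i j) {n : ℕ} (hn : 0 < n) :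
    ∃ w' : NeWord M i j, w'.prod = w.prod ^ n ∧
      w'.toList.length = n * w.toList.length := by
  induction n, hn using Nat.le_induction with
  | base => exact ⟨w, by simp⟩
  | succ n _ ih =>
    obtain ⟨w', hprod, hlen⟩ := ih
    exact ⟨w'.append hij.symm w, by simp [hprod, pow_succ],
      by simp [NeWord.toList, hlen, add_mul]⟩

-- Both powers are reduced words of length `|x| |y|`, and both are prefixes of their product.
theorem pow_length_eq_pow_length_of_commute (hij : i ≠ j) {x y : NeWord M i j}
    (hxy : Commute x.prod y.prod) : x.prod ^ y.toList.length = y.prod ^ x.toList.length := by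
  obtain ⟨x', hx', hlenx⟩ := exists_neWord_prod_eq_pow hij x (length_toList_pos y)
  obtain ⟨y', hy', hleny⟩ := exists_neWord_prod_eq_pow hij y (length_toList_pos x)
  have hlist : x'.toList ++ y'.toList = y'.toList ++ x'.toList :=
    toList_eq_iff_prod_eq (w := x'.append hij.symm y') (w' := y'.append hij.symm x') |>.2 <| by
      simp only [NeWord.append_prod, hx', hy']
      exact (hxy.pow_pow _ _).eq
  rw [← hx', ← hy', ← toList_eq_iff_prod_eq]
  exact (List.append_inj hlist (by rw [hlenx, hleny, mul_comm])).1

theorem not_commute_prod_of_ne (x : NeWord M i j) (y : NeWord M k l) (hjk : j ≠ k) (hlj : l ≠ j) :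
    ¬ Commute x.prod y.prod := by
  intro hxy
  have hlist : ((x.append hjk y).append hlj x.inv).toList = y.toList :=
    toList_eq_iff_prod_eq.2 (by simp [hxy.eq])
  have hlen := congrArg List.length hlist
  have := length_toList_pos x
  simp only [NeWord.toList, List.length_append] at hlen
  omega

theorem exists_zpow_prod_eq_zpow_prod_of_commute (hij : i ≠ j) {x : NeWord M i j}
    {y : NeWord M k l} (hxy : Commute x.prod y.prod) :
    ∃ m n : ℤ, m ≠ 0 ∧ x.prod ^ m = y.prod ^ n := by
  have hright : j ≠ k → l = j := fun hjk ↦ by_contra fun hlj ↦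
    not_commute_prod_of_ne x y hjk hlj hxy
  have hleft : i ≠ k → l = i := fun hik ↦ by_contra fun hli ↦
    not_commute_prod_of_ne x.inv y hik hli (by simpa using hxy)
  rcases eq_or_ne i k with rfl | hik
  · obtain rfl := hright hij.symm
    exact ⟨y.toList.length, x.toList.length, by exact_mod_cast (length_toList_pos y).ne',
      by exact_mod_cast pow_length_eq_pow_length_of_commute hij hxy⟩
  · obtain rfl := hleft hik
    obtain rfl : j = k := by_contra fun hjk ↦ hij (hright hjk)
    refine ⟨y.inv.toList.length, -x.toList.length,
      by exact_mod_cast (length_toList_pos y.inv).ne', ?_⟩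
    have hpow := pow_length_eq_pow_length_of_commute hij (x := x) (y := y.inv) (by simpa using hxy)
    simpa using hpow

theorem isElliptic_or_exists_zpow_eq_zpow_of_commute {x y : CoprodI M} (hx : x ≠ 1) (hy : y ≠ 1)
    (hxy : Commute x y) : IsElliptic x ∨ ∃ m n : ℤ, m ≠ 0 ∧ x ^ m = y ^ n := by
  obtain ⟨i, j, w, rfl⟩ := exists_neWord_prod_eq hx
  refine (isElliptic_or_exists_conj_neWord_eq w).imp_right ?_
  rintro ⟨g, k, l, hkl, v, hv⟩
  have hy' : g⁻¹ * y * g ≠ 1 := by simpa using (conj_eq_one_iff (a := g⁻¹) (b := y)).not.2 hy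
  obtain ⟨i', j', u, hu⟩ := exists_neWord_prod_eq hy'
  have hyu : g * u.prod * g⁻¹ = y := by simp [hu, mul_assoc]
  have hvu : Commute v.prod u.prod := by
    rw [← hv, ← hyu, ← MulAut.conj_apply, ← MulAut.conj_apply] at hxy
    exact hxy.of_map (MulAut.conj g).injective
  obtain ⟨m, n, hm, hpow⟩ := exists_zpow_prod_eq_zpow_prod_of_commute hkl hvu
  exact ⟨m, n, hm, by rw [← hv, ← hyu, conj_zpow, conj_zpow, hpow]⟩

end Commuting

section PermutedFactors

variable (M) in
/-- Every automorphism maps each free factor into a conjugate of some free factor. By the Kurosh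
subgroup theorem this holds when the factors are freely indecomposable and not infinite cyclic. -/
def AutPermutesFactors : Prop :=
  ∀ (φ : MulAut (CoprodI M)) (i : ι), ∃ (j : ι) (g : CoprodI M),
    φ • factor M i ≤ MulAut.conj g • factor M j

variable {i j k : ι} {φ ψ : MulAut (CoprodI M)} {g h : CoprodI M}

theorem eq_of_smul_factor_le [Nontrivial (M i)] (hj : φ • factor M i ≤ MulAut.conj g • factor M j)
    (hk : φ • factor M i ≤ MulAut.conj h • factor M k) : j = k := by
  obtain ⟨m, hm⟩ := exists_ne (1 : M i)
  have hmem : φ • of m ∈ φ • factor M i :=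
    Subgroup.smul_mem_pointwise_smul _ _ _ (of_mem_factor m)
  refine eq_of_mem_conj_smul_factor (fun h ↦ hm ?_) (hj hmem) (hk hmem)
  simpa [MulAut.smul_def, map_eq_one_iff _ (of_injective i)] using h

theorem mul_smul_factor_le (hφ : φ • factor M i ≤ MulAut.conj g • factor M j)
    (hψ : ψ • factor M j ≤ MulAut.conj h • factor M k) :
    (ψ * φ) • factor M i ≤ MulAut.conj (ψ g * h) • factor M k := by
  rw [mul_smul, map_mul, mul_smul]
  calc ψ • φ • factor M i ≤ ψ • MulAut.conj g • factor M j :=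
        Subgroup.pointwise_smul_le_pointwise_smul_iff.2 hφ
    _ = MulAut.conj (ψ g) • ψ • factor M j := smul_conj_smul ψ g _
    _ ≤ MulAut.conj (ψ g) • MulAut.conj h • factor M k :=
        Subgroup.pointwise_smul_le_pointwise_smul_iff.2 hψ

theorem conj_smul_factor_eq_of_le [Nontrivial (M i)]
    (hg : factor M i ≤ MulAut.conj g • factor M i) : MulAut.conj g • factor M i = factor M i := by
  obtain ⟨m, hm⟩ := exists_ne (1 : M i)
  obtain ⟨n, hn⟩ := mem_conj_smul_factor.1 (hg (of_mem_factor m))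
  have hconj : g⁻¹ * of m * g⁻¹⁻¹ = of n := by simp [← hn, mul_assoc]
  exact Subgroup.conj_smul_eq_self_of_mem
    (inv_mem_iff.1 (eq_and_mem_factor_of_conj_of_eq_of hm hconj).2)

namespace AutPermutesFactors

variable [∀ i, Nontrivial (M i)] (hM : AutPermutesFactors M)

/-- The action of the automorphism group on the index set of the free factors. -/
noncomputable def permHom : MulAut (CoprodI M) →* Function.End ι where
  toFun φ i := (hM φ i).choose
  map_one' := by
    funext i
    obtain ⟨g, hg⟩ := (hM 1 i).choose_spec
    exact eq_of_smul_factor_le hg (h := 1) (by simp only [map_one, one_smul]; rfl)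
  map_mul' φ ψ := by
    funext i
    obtain ⟨g, hg⟩ := (hM (φ * ψ) i).choose_spec
    obtain ⟨h, hψ⟩ := (hM ψ i).choose_spec
    obtain ⟨k, hφ⟩ := (hM φ (hM ψ i).choose).choose_spec
    exact eq_of_smul_factor_le hg (mul_smul_factor_le hψ hφ)

theorem finiteIndex_ker_permHom [Finite ι] : hM.permHom.ker.FiniteIndex := by
  have : Finite (Function.End ι) := inferInstanceAs (Finite (ι → ι))
  refine Subgroup.finiteIndex_of_le (H := hM.permHom.toHomUnits.ker) fun φ hφ ↦ ?_
  exact congrArg Units.val hφ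

theorem exists_smul_factor_le_of_mem_ker (hφ : φ ∈ hM.permHom.ker) (i : ι) :
    ∃ g : CoprodI M, φ • factor M i ≤ MulAut.conj g • factor M i := by
  have hi : (hM φ i).choose = i := congrFun hφ i
  simpa only [hi] using (hM φ i).choose_spec

theorem exists_smul_factor_eq_of_mem_ker (hφ : φ ∈ hM.permHom.ker) (i : ι) :
    ∃ g : CoprodI M, φ • factor M i = MulAut.conj g • factor M i := by
  obtain ⟨g, hg⟩ := hM.exists_smul_factor_le_of_mem_ker hφ i
  obtain ⟨k, hk⟩ := hM.exists_smul_factor_le_of_mem_ker (inv_mem hφ) i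
  refine ⟨g, hg.antisymm ?_⟩
  have hle := mul_smul_factor_le hk hg
  rw [mul_inv_cancel, one_smul] at hle
  rw [← Subgroup.pointwise_smul_le_pointwise_smul_iff (a := MulAut.conj (φ k)), ← mul_smul,
    ← map_mul, conj_smul_factor_eq_of_le hle, ← smul_conj_smul,
    Subgroup.subset_pointwise_smul_iff]
  exact hk

theorem exists_mulAut_of_mem_ker (hφ : φ ∈ hM.permHom.ker) (i : ι) :
    ∃ (g : CoprodI M) (α : MulAut (M i)), ∀ m, φ (of m) = g * of (α m) * g⁻¹ := by
  obtain ⟨g, hg⟩ := hM.exists_smul_factor_eq_of_mem_ker hφ i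
  have hstab : (MulAut.conj g⁻¹ * φ) • factor M i = factor M i := by
    rw [mul_smul, hg, ← mul_smul, ← map_mul, inv_mul_cancel, map_one, one_smul]
  obtain ⟨α, hα⟩ := exists_mulAut_of_smul_range_eq (of_injective i) hstab
  refine ⟨g, α, fun m ↦ ?_⟩
  simp [← hα, mul_assoc]

end AutPermutesFactors

end PermutedFactors

section FactorAutomorphisms

variable (M) in
/-- The automorphism of a free product that acts on each factor by a given automorphism. -/
def factorAut : (∀ i, MulAut (M i)) →* MulAut (CoprodI M) where
  toFun α := MonoidHom.toMulEquiv (lift fun i ↦ of.comp (α i).toMonoidHom)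
    (lift fun i ↦ of.comp (α i)⁻¹.toMonoidHom) (by ext; simp) (by ext; simp)
  map_one' := MulEquiv.toMonoidHom_injective (by ext; simp)
  map_mul' α β := MulEquiv.toMonoidHom_injective (by ext; simp)

@[simp]
theorem factorAut_of (α : ∀ i, MulAut (M i)) {i : ι} (m : M i) :
    factorAut M α (of m) = of (α i m) := by
  simp [factorAut]

theorem mulAut_ext {φ ψ : MulAut (CoprodI M)} (h : ∀ i (m : M i), φ (of m) = ψ (of m)) :
    φ = ψ :=
  MulEquiv.toMonoidHom_injective (ext_hom _ _ fun i ↦ MonoidHom.ext (h i))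

variable (M) in
/-- The homomorphism sending a family `m` to the outer class of the automorphism that conjugates
the `i`-th factor by `m i`. -/
def outPiConj : (∀ i, M i) →* Out (CoprodI M) :=
  (Out.mk.comp (factorAut M)).comp (Out.piConj M)

theorem outPiConj_injective [Nontrivial ι] [∀ i, Nontrivial (M i)]
    (hM : ∀ i, Subgroup.center (M i) = ⊥) : Function.Injective (outPiConj M) := by
  rw [injective_iff_map_eq_one]
  intro x hx
  obtain ⟨k, hk⟩ := Out.mk_eq_one_iff.1 hx
  have hconj (i : ι) (m : M i) : k * of m * k⁻¹ = of (x i * m * (x i)⁻¹) := by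
    simpa [Out.piConj] using DFunLike.congr_fun hk (of m)
  have hmem (i : ι) : k ∈ factor M i := by
    obtain ⟨m, hm⟩ := exists_ne (1 : M i)
    exact (eq_and_mem_factor_of_conj_of_eq_of hm (hconj i m)).2
  obtain rfl : k = 1 := by
    obtain ⟨i, j, hij⟩ := exists_pair_ne ι
    rw [← Subgroup.mem_bot, ← factor_inf_factor (M := M) hij]
    exact ⟨hmem i, hmem j⟩
  funext i
  rw [Pi.one_apply, ← Subgroup.mem_bot, ← hM i, Subgroup.mem_center_iff]
  intro m
  have hm : m = x i * m * (x i)⁻¹ :=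
    of_injective i (by simpa only [one_mul, inv_one, mul_one] using hconj i m)
  rwa [eq_mul_inv_iff_mul_eq] at hm

end FactorAutomorphisms

section TwoFactors

variable {M : Bool → Type*} [∀ b, Group (M b)]

theorem exists_eq_of_mul_mul_of (h : CoprodI M) :
    ∃ (a : M false) (b : M true) (h' : CoprodI M), h = of a * h' * of b ∧
      (h' = 1 ∨ ∃ w : NeWord M true false, w.prod = h') := by
  obtain ⟨g, b, rfl, rfl | ⟨k, l, hl, w, rfl⟩⟩ := exists_eq_mul_of true h
  · exact ⟨1, b, 1, by simp, .inl rfl⟩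
  obtain rfl : l = false := by simpa using hl
  cases k with
  | true => exact ⟨1, b, w.prod, by simp, .inr ⟨w, rfl⟩⟩
  | false =>
    rcases toList_eq_head_cons w with ⟨-, hw⟩ | ⟨k, hk, w', hw⟩
    · exact ⟨w.head, b, 1, by simp [prod_eq_prod_map_toList, hw], .inl rfl⟩
    · obtain rfl : k = true := by simpa using hk.symm
      exact ⟨w.head, b, w'.prod, by simp [prod_eq_prod_map_toList, hw], .inr ⟨w', rfl⟩⟩

section NotSurjective

variable {h : NeWord M true false} {γ : CoprodI M →* CoprodI M}

theorem exists_neWord_prod_eq_map (hfalse : ∀ m : M false, γ (of m) = of m)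
    (htrue : ∀ m : M true, γ (of m) = h.prod * of m * h.prod⁻¹) {i j : Bool} (w : NeWord M i j) :
    ∃ w' : NeWord M i j, w'.prod = γ w.prod ∧
      (w'.prod ∈ factor M false ∨ w'.toList.length ≠ 1) := by
  induction w with
  | @singleton i x hx =>
    cases i with
    | false => exact ⟨.singleton x hx, by simp [hfalse], .inl (by simpa using of_mem_factor x)⟩
    | true =>
      refine ⟨(h.append (by simp) (.singleton x hx)).append (by simp) h.inv,
        by simp [htrue], .inr ?_⟩
      have := length_toList_pos h
      simp only [NeWord.toList, List.length_append, List.length_singleton]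
      omega
  | append w₁ hne w₂ ih₁ ih₂ =>
    obtain ⟨v₁, hv₁, -⟩ := ih₁
    obtain ⟨v₂, hv₂, -⟩ := ih₂
    refine ⟨v₁.append hne v₂, by simp [hv₁, hv₂], .inr ?_⟩
    have := length_toList_pos v₁
    have := length_toList_pos v₂
    simp only [NeWord.toList, List.length_append]
    omega

theorem not_surjective_of_conj_neWord [Nontrivial (M true)]
    (hfalse : ∀ m : M false, γ (of m) = of m)
    (htrue : ∀ m : M true, γ (of m) = h.prod * of m * h.prod⁻¹) : ¬ Function.Surjective γ := by
  intro hsurj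
  obtain ⟨b, hb⟩ := exists_ne (1 : M true)
  have hb' : (of b : CoprodI M) ≠ 1 := (map_ne_one_iff _ (of_injective true)).2 hb
  obtain ⟨g, hg⟩ := hsurj (of b)
  obtain ⟨i, j, w, rfl⟩ := exists_neWord_prod_eq (g := g) (by rintro rfl; simp [hb'.symm] at hg)
  obtain ⟨w', hw', hmem | hlen⟩ := exists_neWord_prod_eq_map hfalse htrue w
  · rw [hw', hg] at hmem
    have hinf : of b ∈ factor M true ⊓ factor M false := ⟨of_mem_factor b, hmem⟩
    rw [factor_inf_factor (by simp)] at hinf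
    exact hb' hinf
  · have hlist : w'.toList = (NeWord.singleton b hb).toList :=
      toList_eq_iff_prod_eq.2 (by simp [hw', hg])
    exact hlen (by simp [hlist, NeWord.toList])

end NotSurjective

theorem AutPermutesFactors.exists_eq_conj_mul_factorAut [∀ b, Nontrivial (M b)]
    (hM : AutPermutesFactors M) {φ : MulAut (CoprodI M)} (hφ : φ ∈ hM.permHom.ker) :
    ∃ (c : CoprodI M) (α : ∀ b, MulAut (M b)), φ = MulAut.conj c * factorAut M α := by
  obtain ⟨g, α, hα⟩ := hM.exists_mulAut_of_mem_ker hφ false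
  obtain ⟨k, β, hβ⟩ := hM.exists_mulAut_of_mem_ker hφ true
  obtain ⟨a, b, h, hgk, hh⟩ := exists_eq_of_mul_mul_of (g⁻¹ * k)
  obtain rfl : k = g * of a * h * of b := by simp [mul_assoc, ← hgk]
  let δ : ∀ b, MulAut (M b)
    | false => MulAut.conj a⁻¹ * α
    | true => MulAut.conj b * β
  let γ := (MulAut.conj (g * of a))⁻¹ * φ * (factorAut M δ)⁻¹
  have hγ : φ = MulAut.conj (g * of a) * γ * factorAut M δ := by simp [γ, mul_assoc]
  have hγδ (i : Bool) (m : M i) :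
      γ (of m) = (g * of a)⁻¹ * φ (of ((δ i)⁻¹ m)) * (g * of a) := by
    simp [γ, ← map_inv, mul_assoc]
  have hfalse (m : M false) : γ (of m) = of m := by
    simp [hγδ, hα, δ, mul_assoc]
  have htrue (m : M true) : γ (of m) = h * of m * h⁻¹ := by
    simp [hγδ, hβ, δ, mul_assoc]
  rcases hh with rfl | ⟨w, rfl⟩
  · have hγ1 : γ = 1 := mulAut_ext (by rintro (_ | _) m <;> simp [hfalse, htrue])
    exact ⟨g * of a, δ, by rwa [hγ1, mul_one] at hγ⟩
  · exact absurd γ.surjective (not_surjective_of_conj_neWord (γ := γ.toMonoidHom) hfalse htrue)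

theorem finiteIndex_range_mk_comp_factorAut [∀ b, Nontrivial (M b)] (hM : AutPermutesFactors M) :
    (Out.mk.comp (factorAut M)).range.FiniteIndex := by
  have hker := hM.finiteIndex_ker_permHom
  have hmk : (Out.mk (G := CoprodI M)).range.FiniteIndex := by
    rw [MonoidHom.range_eq_top.2 Out.mk_surjective]
    infer_instance
  have hmap := finiteIndex_map Out.mk hM.permHom.ker
  refine Subgroup.finiteIndex_of_le (H := hM.permHom.ker.map Out.mk) ?_
  rintro _ ⟨φ, hφ, rfl⟩
  obtain ⟨c, α, rfl⟩ := hM.exists_eq_conj_mul_factorAut hφ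
  exact ⟨α, by simp [Out.mk_conj]⟩

theorem finiteIndex_range_outPiConj [∀ b, Nontrivial (M b)] [∀ b, Finite (Out (M b))]
    (hM : AutPermutesFactors M) : (outPiConj M).range.FiniteIndex := by
  have := finiteIndex_range_mk_comp_factorAut hM
  have := Out.finiteIndex_range_piConj (M := M)
  rw [outPiConj, MonoidHom.range_comp]
  exact finiteIndex_map _ _

end TwoFactors

section FreeGroup

theorem freeGroup_eq_of_semiconjBy_of {α : Type*} {f : FreeGroup α} {a b : α}
    (h : SemiconjBy f (FreeGroup.of b) (FreeGroup.of a)) : b = a := by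
  have hab := congrArg Abelianization.of h.eq
  rw [map_mul, map_mul, mul_comm, mul_left_inj] at hab
  exact FreeAbelianGroup.of_injective hab

theorem freeGroup_eq_one_of_commute_of_of {α : Type*} {f : FreeGroup α} {a b : α} (hab : a ≠ b)
    (ha : Commute (FreeGroup.of a) f) (hb : Commute (FreeGroup.of b) f) : f = 1 := by
  let e := freeGroupEquivCoprodI (ι := α)
  have hmem (c : α) (hc : Commute (FreeGroup.of c) f) :
      e f ∈ factor (fun _ : α ↦ FreeGroup _) c := by
    have hfactor : e (FreeGroup.of c) ∈
        MulAut.conj (1 : CoprodI _) • factor (fun _ : α ↦ FreeGroup _) c :=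
      mem_conj_smul_factor.2 ⟨FreeGroup.of PUnit.unit, by simp [e]⟩
    have hne : e (FreeGroup.of c) ≠ 1 :=
      (map_ne_one_iff e e.injective).2 (FreeGroup.of_ne_one c)
    simpa using mem_conj_smul_factor_of_commute hfactor hne (hc.map e)
  exact (map_eq_one_iff e e.injective).1 ((factor_inf_factor hab).le ⟨hmem a ha, hmem b hb⟩)

end FreeGroup

end FreeProd

namespace RAAG

variable {V : Type*} {Γ : SimpleGraph V} {G : Type*} [Group G]

section UniversalProperty

variable (Γ) in
/-- The generator of a right-angled Artin group attached to a vertex. -/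
def gen (v : V) : RAAG Γ :=
  PresentedGroup.of v

variable (Γ) in
/-- The condition on a map from the vertices to a group under which it extends to the
right-angled Artin group: adjacent vertices have commuting images. -/
def CommutesOnAdj (f : V → G) : Prop :=
  ∀ ⦃v w⦄, Γ.Adj v w → Commute (f v) (f w)

theorem commutesOnAdj_gen : CommutesOnAdj Γ (gen Γ) := fun v w hvw ↦
  commutatorElement_eq_one_iff_commute.1
    (PresentedGroup.one_of_mem ⟨v, w, hvw, rfl⟩ :
      PresentedGroup.mk (raagRels Γ) ⁅FreeGroup.of v, FreeGroup.of w⁆ = 1)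

theorem CommutesOnAdj.map {H : Type*} [Group H] {f : V → G} (hf : CommutesOnAdj Γ f)
    (φ : G →* H) : CommutesOnAdj Γ (φ ∘ f) :=
  fun _ _ hvw ↦ (hf hvw).map φ

theorem CommutesOnAdj.update [DecidableEq V] {f : V → G} (hf : CommutesOnAdj Γ f) {v : V} {x : G}
    (hx : ∀ w, Γ.Adj v w → Commute x (f w)) : CommutesOnAdj Γ (Function.update f v x) := by
  intro u w huw
  by_cases hu : u = v <;> by_cases hw : w = v
  · exact absurd (hu.trans hw.symm) huw.ne
  · subst hu
    simpa [hw] using hx w huw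
  · subst hw
    simpa [hu] using (hx u huw.symm).symm
  · simpa [hu, hw] using hf huw

theorem CommutesOnAdj.mulIndicator {S : Set V} {f : V → G}
    (hf : ∀ ⦃v⦄, v ∈ S → ∀ ⦃w⦄, w ∈ S → Γ.Adj v w → Commute (f v) (f w)) :
    CommutesOnAdj Γ (S.mulIndicator f) := by
  intro v w hvw
  by_cases hv : v ∈ S
  · by_cases hw : w ∈ S
    · simpa [hv, hw] using hf hv hw hvw
    · simp [hw]
  · simp [hv]

/-- The homomorphism from a right-angled Artin group with given values on the generators. -/
def lift (f : V → G) (hf : CommutesOnAdj Γ f) : RAAG Γ →* G :=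
  PresentedGroup.toGroup (f := f) <| by
    rintro _ ⟨v, w, hvw, rfl⟩
    simpa [commutatorElement_eq_one_iff_commute] using hf hvw

@[simp]
theorem lift_gen (f : V → G) (hf : CommutesOnAdj Γ f) (v : V) : lift f hf (gen Γ v) = f v :=
  PresentedGroup.toGroup.of _

theorem hom_ext {φ ψ : RAAG Γ →* G} (h : ∀ v, φ (gen Γ v) = ψ (gen Γ v)) : φ = ψ :=
  PresentedGroup.ext h

end UniversalProperty

section Exponents

open Classical in
variable (Γ) in
/-- The total exponent of the generator `v` in an element. -/
noncomputable def exponent (v : V) : RAAG Γ →* Multiplicative ℤ :=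
  lift (Pi.mulSingle v (Multiplicative.ofAdd 1)) fun _ _ _ ↦ Commute.all _ _

@[simp]
theorem exponent_gen_self (v : V) : exponent Γ v (gen Γ v) = Multiplicative.ofAdd 1 := by
  classical exact (lift_gen _ _ v).trans (Pi.mulSingle_eq_same v _)

theorem exponent_gen_of_ne {v w : V} (hvw : v ≠ w) : exponent Γ w (gen Γ v) = 1 := by
  classical exact (lift_gen _ _ v).trans (Pi.mulSingle_eq_of_ne hvw _)

theorem eq_zero_of_gen_zpow_eq_gen_zpow {v w : V} (hvw : v ≠ w) {m n : ℤ}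
    (h : gen Γ v ^ m = gen Γ w ^ n) : m = 0 := by
  simpa [exponent_gen_of_ne hvw.symm, ← ofAdd_zsmul] using congrArg (exponent Γ v) h

theorem gen_ne_one (v : V) : gen Γ v ≠ 1 := by
  intro h
  simpa using (exponent_gen_self v).symm.trans ((congrArg (exponent Γ v) h).trans (map_one _))

instance [Nonempty V] : Nontrivial (RAAG Γ) :=
  ⟨gen Γ (Classical.arbitrary V), 1, gen_ne_one _⟩

end Exponents

section Transvections

variable {a b : V}

open Classical in
/-- The transvection `a ↦ a * b ^ e` fixing the other generators, for `lk a ⊆ st b`. -/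
noncomputable def transvection (hab : Γ.neighborSet a ⊆ insert b (Γ.neighborSet b)) (e : ℤ) :
    RAAG Γ →* RAAG Γ :=
  lift (Function.update (gen Γ) a (gen Γ a * gen Γ b ^ e)) <| commutesOnAdj_gen.update <| by
    intro w haw
    refine (commutesOnAdj_gen haw).mul_left (Commute.zpow_left ?_ e)
    rcases hab haw with rfl | hbw
    · rfl
    · exact commutesOnAdj_gen hbw

theorem transvection_gen_self (hab : Γ.neighborSet a ⊆ insert b (Γ.neighborSet b)) (e : ℤ) :
    transvection hab e (gen Γ a) = gen Γ a * gen Γ b ^ e := by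
  simp [transvection]

theorem transvection_gen_of_ne (hab : Γ.neighborSet a ⊆ insert b (Γ.neighborSet b)) (e : ℤ)
    {v : V} (hv : v ≠ a) : transvection hab e (gen Γ v) = gen Γ v := by
  simp [transvection, hv]

theorem not_neighborSet_subset_of_finite_out [Finite (Out (RAAG Γ))] (hne : a ≠ b) :
    ¬ Γ.neighborSet a ⊆ insert b (Γ.neighborSet b) := by
  intro hab
  obtain ⟨n, hn, g, hg⟩ := Out.exists_eq_conj_of_map_add (transvection hab)
    (hom_ext fun v ↦ by
      rcases eq_or_ne v a with rfl | hv
      · simp [transvection_gen_self]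
      · simp [transvection_gen_of_ne hab _ hv])
    (fun d e ↦ hom_ext fun v ↦ by
      rcases eq_or_ne v a with rfl | hv
      · simp [transvection_gen_self, transvection_gen_of_ne hab _ hne.symm, zpow_add, mul_assoc]
      · simp [transvection_gen_of_ne hab _ hv])
  have hexp : exponent Γ b (gen Γ a * gen Γ b ^ n) = exponent Γ b (g * gen Γ a * g⁻¹) := by
    rw [← hg, transvection_gen_self, zpow_natCast]
  simp [exponent_gen_of_ne hne, ← ofAdd_nsmul] at hexp
  omega

end Transvections

section PartialConjugations

variable {C : Set V}

open Classical in
/-- The partial conjugation fixing the generators in the union `C` of connected components and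
conjugating the others by `g`. -/
noncomputable def partialConj (hC : ∀ ⦃u w⦄, Γ.Adj u w → (u ∈ C ↔ w ∈ C)) (g : RAAG Γ) :
    RAAG Γ →* RAAG Γ :=
  lift (C.piecewise (gen Γ) (MulAut.conj g ∘ gen Γ)) <| by
    intro u w huw
    by_cases hu : u ∈ C
    · simpa [hu, (hC huw).1 hu] using commutesOnAdj_gen huw
    · simpa [hu, (hC huw).not.1 hu] using commutesOnAdj_gen huw

theorem partialConj_gen_of_mem (hC : ∀ ⦃u w⦄, Γ.Adj u w → (u ∈ C ↔ w ∈ C)) (g : RAAG Γ)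
    {v : V} (hv : v ∈ C) :
    partialConj hC g (gen Γ v) = gen Γ v := by
  classical exact (lift_gen _ _ v).trans (C.piecewise_eq_of_mem _ _ hv)

theorem partialConj_gen_of_notMem (hC : ∀ ⦃u w⦄, Γ.Adj u w → (u ∈ C ↔ w ∈ C)) (g : RAAG Γ)
    {v : V} (hv : v ∉ C) :
    partialConj hC g (gen Γ v) = g * gen Γ v * g⁻¹ := by
  classical exact (lift_gen _ _ v).trans (C.piecewise_eq_of_notMem _ _ hv)

/-- The homomorphism to a free group that keeps the generators in an independent set `S` and kills
the others. -/
noncomputable def toFreeGroup {S : Set V} (hS : Γ.IsIndepSet S) : RAAG Γ →* FreeGroup V :=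
  lift (S.mulIndicator FreeGroup.of) <| .mulIndicator fun _ hv _ hw hvw ↦
    absurd hvw (hS hv hw hvw.ne)

theorem toFreeGroup_gen {S : Set V} (hS : Γ.IsIndepSet S) {v : V} (hv : v ∈ S) :
    toFreeGroup hS (gen Γ v) = FreeGroup.of v := by
  simp [toFreeGroup, hv]

theorem eq_or_adj_of_finite_out [Finite (Out (RAAG Γ))]
    (hC : ∀ ⦃u w⦄, Γ.Adj u w → (u ∈ C ↔ w ∈ C)) {v v' w : V} (hv : v ∈ C) (hv' : v' ∈ C)
    (hw : w ∉ C) : v = v' ∨ Γ.Adj v v' := by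
  by_contra! ⟨hne, hadj⟩
  obtain ⟨n, hn, k, hk⟩ := Out.exists_eq_conj_of_map_add
    (fun e ↦ partialConj hC (gen Γ v ^ e))
    (hom_ext fun u ↦ by
      by_cases hu : u ∈ C <;> simp [partialConj_gen_of_mem, partialConj_gen_of_notMem, hu])
    (fun d e ↦ hom_ext fun u ↦ by
      by_cases hu : u ∈ C <;>
        simp [partialConj_gen_of_mem, partialConj_gen_of_notMem, hu, hv, add_comm d e, zpow_add,
          mul_assoc])
  have hC_adj {u : V} (hu : u ∈ C) : ¬ Γ.Adj u w := fun h ↦ hw ((hC h).1 hu)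
  have hS : Γ.IsIndepSet {v, v', w} := by
    simp [SimpleGraph.IsIndepSet, Set.pairwise_insert, hadj, hC_adj hv, hC_adj hv',
      SimpleGraph.adj_comm]
  let π := toFreeGroup hS
  have hkC {u : V} (hu : u ∈ C) : Commute (gen Γ u) k := by
    have hku := hk (gen Γ u)
    rw [partialConj_gen_of_mem hC _ hu, eq_mul_inv_iff_mul_eq] at hku
    exact hku
  have hπk : π k = 1 := FreeProd.freeGroup_eq_one_of_commute_of_of hne
    (by simpa [π, toFreeGroup_gen] using (hkC hv).map π)
    (by simpa [π, toFreeGroup_gen] using (hkC hv').map π)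
  have hπw : FreeGroup.of v ^ n * FreeGroup.of w * (FreeGroup.of v ^ n)⁻¹ = FreeGroup.of w := by
    have hkw := congrArg π (hk (gen Γ w))
    rw [partialConj_gen_of_notMem hC _ hw] at hkw
    simpa [hπk, π, toFreeGroup_gen] using hkw
  have hvn : FreeGroup.of v ^ n = 1 := FreeProd.freeGroup_eq_one_of_commute_of_of
    (ne_of_mem_of_not_mem hv hw) (.pow_right rfl n) (mul_inv_eq_iff_eq_mul.1 hπw).symm
  simp [hn.ne'] at hvn

end PartialConjugations

section Connectedness

theorem preconnected_of_finite_out [Finite (Out (RAAG Γ))] : Γ.Preconnected := by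
  by_contra hΓ
  simp only [SimpleGraph.Preconnected, not_forall] at hΓ
  obtain ⟨v, w, hvw⟩ := hΓ
  let C : Set V := {u | Γ.Reachable v u}
  have hC ⦃u u' : V⦄ (h : Γ.Adj u u') : u ∈ C ↔ u' ∈ C :=
    ⟨fun hu ↦ hu.trans h.reachable, fun hu ↦ hu.trans h.symm.reachable⟩
  have hv : v ∈ C := .refl v
  have hstar {u : V} (hu : u ∈ C) : u = v ∨ Γ.Adj v u :=
    (eq_or_adj_of_finite_out hC hv hu hvw).imp_left .symm
  by_cases hsingle : ∃ u, Γ.Adj v u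
  · obtain ⟨u, hvu⟩ := hsingle
    exact not_neighborSet_subset_of_finite_out hvu.ne' fun c huc ↦
      hstar ((hC huc).1 ((hC hvu).1 hv))
  · push Not at hsingle
    exact not_neighborSet_subset_of_finite_out (ne_of_mem_of_not_mem hv hvw) fun c hvc ↦
      absurd hvc (hsingle c)

end Connectedness

section Kill

variable (Γ) in
/-- The endomorphism killing the generators in `S` and fixing the others. -/
noncomputable def kill (S : Set V) : RAAG Γ →* RAAG Γ :=
  lift (Sᶜ.mulIndicator (gen Γ)) <| .mulIndicator fun _ _ _ _ ↦ @commutesOnAdj_gen _ Γ _ _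

theorem kill_gen_of_mem {S : Set V} {v : V} (hv : v ∈ S) : kill Γ S (gen Γ v) = 1 := by
  simp [kill, hv]

theorem kill_gen_of_notMem {S : Set V} {v : V} (hv : v ∉ S) : kill Γ S (gen Γ v) = gen Γ v := by
  simp [kill, hv]

theorem kill_union (S T : Set V) : kill Γ (S ∪ T) = (kill Γ S).comp (kill Γ T) := by
  refine hom_ext fun v ↦ ?_
  by_cases hT : v ∈ T
  · simp [kill_gen_of_mem, hT]
  · by_cases hS : v ∈ S <;> simp [kill_gen_of_mem, kill_gen_of_notMem, hS, hT]

theorem closure_range_gen : Subgroup.closure (Set.range (gen Γ)) = ⊤ :=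
  PresentedGroup.closure_range_of _

theorem exists_finset_kill_eq_one (x : RAAG Γ) : ∃ S : Finset V, kill Γ S x = 1 := by
  classical
  have hx : x ∈ Subgroup.closure (Set.range (gen Γ)) := closure_range_gen ▸ Subgroup.mem_top x
  induction hx using Subgroup.closure_induction with
  | mem _ hx =>
    obtain ⟨v, rfl⟩ := hx
    exact ⟨{v}, kill_gen_of_mem (by simp)⟩
  | one => exact ⟨∅, map_one _⟩
  | mul x y _ _ hx hy =>
    obtain ⟨S, hS⟩ := hx
    obtain ⟨T, hT⟩ := hy
    refine ⟨S ∪ T, ?_⟩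
    rw [map_mul, Finset.coe_union]
    nth_rw 1 [Set.union_comm]
    simp [kill_union, hS, hT]
  | inv x _ hx =>
    obtain ⟨S, hS⟩ := hx
    exact ⟨S, by simp [hS]⟩

theorem eq_one_of_forall_kill_singleton_eq {x : RAAG Γ} (hx : ∀ v, kill Γ {v} x = x) : x = 1 := by
  classical
  have hfix (S : Finset V) : kill Γ S x = x := by
    induction S using Finset.induction_on with
    | empty => simp [show kill Γ ∅ = .id _ from hom_ext fun _ ↦ kill_gen_of_notMem (by simp)]
    | insert v S _ ih =>
      rw [Finset.coe_insert, Set.insert_eq, kill_union, MonoidHom.comp_apply, ih, hx]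
  obtain ⟨S, hS⟩ := exists_finset_kill_eq_one x
  rw [← hfix S, hS]

end Kill

section Center

variable {v w : V}

variable (Γ) in
/-- The subgroup generated by the neighbours of `v`. -/
def linkSubgroup (v : V) : Subgroup (RAAG Γ) :=
  Subgroup.closure (gen Γ '' Γ.neighborSet v)

theorem gen_mem_linkSubgroup_iff : gen Γ w ∈ linkSubgroup Γ v ↔ Γ.Adj v w := by
  refine ⟨fun hw ↦ ?_, fun hw ↦ Subgroup.subset_closure ⟨w, hw, rfl⟩⟩
  by_contra hvw
  have hle : linkSubgroup Γ v ≤ (exponent Γ w).ker := by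
    refine (Subgroup.closure_le _).2 ?_
    rintro _ ⟨u, hu, rfl⟩
    exact exponent_gen_of_ne fun huw ↦ hvw (huw ▸ hu)
  simpa using (exponent_gen_self w).symm.trans (hle hw)

theorem commute_gen_of_mem_linkSubgroup {k : RAAG Γ} (hk : k ∈ linkSubgroup Γ v) :
    Commute k (gen Γ v) := by
  have hle : linkSubgroup Γ v ≤ Subgroup.centralizer {gen Γ v} := by
    refine (Subgroup.closure_le _).2 ?_
    rintro _ ⟨u, hu, rfl⟩
    exact Subgroup.mem_centralizer_singleton_iff.2 (commutesOnAdj_gen hu).symm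
  exact Subgroup.mem_centralizer_singleton_iff.1 (hle hk)

variable (Γ) in
/-- The action of a right-angled Artin group on the free group over the cosets of the link of `v`
that permutes the basis by left multiplication. -/
def cosetAction (v : V) : RAAG Γ →* MulAut (FreeGroup (RAAG Γ ⧸ linkSubgroup Γ v)) where
  toFun g := FreeGroup.freeGroupCongr (MulAction.toPerm g)
  map_one' := MulEquiv.toMonoidHom_injective <| FreeGroup.ext_hom _ _ fun x ↦ by simp
  map_mul' g h := MulEquiv.toMonoidHom_injective <| FreeGroup.ext_hom _ _ fun x ↦ by simp [mul_smul]

@[simp]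
theorem cosetAction_of (g : RAAG Γ) (x : RAAG Γ ⧸ linkSubgroup Γ v) :
    cosetAction Γ v g (FreeGroup.of x) = FreeGroup.of (g • x) := by
  simp [cosetAction]

open Classical in
variable (Γ) in
/-- The embedding that displays the kernel of `kill Γ {v}` as a subgroup of the free group on the
conjugates of `gen Γ v`, indexed by the cosets of the link of `v`. -/
noncomputable def toSemidirect (v : V) :
    RAAG Γ →* FreeGroup (RAAG Γ ⧸ linkSubgroup Γ v) ⋊[cosetAction Γ v] RAAG Γ :=
  lift (Function.update (SemidirectProduct.inr ∘ gen Γ) v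
      (SemidirectProduct.inl (FreeGroup.of ((1 : RAAG Γ) : RAAG Γ ⧸ linkSubgroup Γ v)))) <|
    (commutesOnAdj_gen.map SemidirectProduct.inr).update fun w hvw ↦ by
      have hfix : cosetAction Γ v (gen Γ w) (FreeGroup.of ((1 : RAAG Γ) : _ ⧸ linkSubgroup Γ v)) =
          FreeGroup.of ((1 : RAAG Γ) : _ ⧸ linkSubgroup Γ v) := by
        rw [cosetAction_of, MulAction.Quotient.smul_coe, smul_eq_mul, mul_one]
        exact congrArg _ (QuotientGroup.eq.2 (by simpa using gen_mem_linkSubgroup_iff.2 hvw))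
      ext <;> simp [hfix]

theorem toSemidirect_gen_self : toSemidirect Γ v (gen Γ v) =
    SemidirectProduct.inl (FreeGroup.of ((1 : RAAG Γ) : RAAG Γ ⧸ linkSubgroup Γ v)) := by
  simp [toSemidirect]

theorem toSemidirect_gen_of_ne (hw : w ≠ v) :
    toSemidirect Γ v (gen Γ w) = SemidirectProduct.inr (gen Γ w) := by
  simp [toSemidirect, hw]

theorem toSemidirect_conj_gen_self (hw : w ≠ v) :
    toSemidirect Γ v (gen Γ w * gen Γ v * (gen Γ w)⁻¹) =
      SemidirectProduct.inl (FreeGroup.of ((gen Γ w : RAAG Γ) : RAAG Γ ⧸ linkSubgroup Γ v)) := by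
  rw [map_mul, map_mul, map_inv, toSemidirect_gen_self, toSemidirect_gen_of_ne hw, ← map_inv,
    ← SemidirectProduct.inl_aut, cosetAction_of, MulAction.Quotient.smul_coe, smul_eq_mul, mul_one]

variable (Γ) in
/-- The left inverse of `toSemidirect`, sending the basis element `[h]` of the free group to the
conjugate of `gen Γ v` by `h`. -/
noncomputable def ofSemidirect (v : V) :
    FreeGroup (RAAG Γ ⧸ linkSubgroup Γ v) ⋊[cosetAction Γ v] RAAG Γ →* RAAG Γ :=
  SemidirectProduct.lift
    (FreeGroup.lift <| Quotient.lift (fun h ↦ h * gen Γ v * h⁻¹) fun a b hab ↦ by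
      have hk := (commute_gen_of_mem_linkSubgroup (QuotientGroup.leftRel_apply.1 hab)).eq
      rw [mul_assoc, ← eq_inv_mul_iff_mul_eq] at hk
      rw [mul_inv_eq_iff_eq_mul, hk]
      group)
    (.id _)
    fun g ↦ FreeGroup.ext_hom _ _ fun x ↦ by
      induction x using QuotientGroup.induction_on with
      | H h => simp; group

theorem ofSemidirect_toSemidirect (x : RAAG Γ) : ofSemidirect Γ v (toSemidirect Γ v x) = x := by
  suffices (ofSemidirect Γ v).comp (toSemidirect Γ v) = .id _ from DFunLike.congr_fun this x
  refine hom_ext fun u ↦ ?_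
  rcases eq_or_ne u v with rfl | hu
  · simp [toSemidirect_gen_self, ofSemidirect]
  · simp [toSemidirect_gen_of_ne hu, ofSemidirect]

theorem toSemidirect_right (x : RAAG Γ) : (toSemidirect Γ v x).right = kill Γ {v} x := by
  suffices SemidirectProduct.rightHom.comp (toSemidirect Γ v) = kill Γ {v} from
    DFunLike.congr_fun this x
  refine hom_ext fun u ↦ ?_
  rcases eq_or_ne u v with rfl | hu
  · simp [toSemidirect_gen_self, kill_gen_of_mem]
  · simp [toSemidirect_gen_of_ne hu, kill_gen_of_notMem, hu]

theorem commute_toSemidirect_left {z c : RAAG Γ} (hz : Commute z c)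
    {x : RAAG Γ ⧸ linkSubgroup Γ v}
    (hc : toSemidirect Γ v c = SemidirectProduct.inl (FreeGroup.of x)) :
    Commute (FreeGroup.of x) (toSemidirect Γ v z).left := by
  have hleft := congrArg SemidirectProduct.left (hz.map (toSemidirect Γ v)).eq
  simp only [hc, SemidirectProduct.mul_left, SemidirectProduct.left_inl,
    SemidirectProduct.right_inl, map_one, MulAut.one_apply, cosetAction_of] at hleft
  rw [FreeProd.freeGroup_eq_of_semiconjBy_of hleft] at hleft
  exact hleft.symm

theorem kill_singleton_eq_of_mem_center (hwv : w ≠ v) (hvw : ¬ Γ.Adj v w) {z : RAAG Γ}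
    (hz : z ∈ Subgroup.center (RAAG Γ)) : kill Γ {v} z = z := by
  have hcomm (c : RAAG Γ) : Commute z c := (Subgroup.mem_center_iff.1 hz c).symm
  have hcosets : ((1 : RAAG Γ) : RAAG Γ ⧸ linkSubgroup Γ v) ≠ (gen Γ w : RAAG Γ) := by
    simpa [QuotientGroup.eq, gen_mem_linkSubgroup_iff] using hvw
  have hleft : (toSemidirect Γ v z).left = 1 :=
    FreeProd.freeGroup_eq_one_of_commute_of_of hcosets
      (commute_toSemidirect_left (hcomm _) toSemidirect_gen_self)
      (commute_toSemidirect_left (hcomm _) (toSemidirect_conj_gen_self hwv))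
  have hinr : toSemidirect Γ v z = SemidirectProduct.inr (kill Γ {v} z) := by
    ext
    · simp [hleft]
    · simp [toSemidirect_right]
  simpa [hinr, ofSemidirect] using ofSemidirect_toSemidirect (v := v) z

theorem center_eq_bot (hΓ : ∀ v, ∃ w, w ≠ v ∧ ¬ Γ.Adj v w) : Subgroup.center (RAAG Γ) = ⊥ := by
  refine (Subgroup.eq_bot_iff_forall _).2 fun z hz ↦ eq_one_of_forall_kill_singleton_eq fun v ↦ ?_
  obtain ⟨w, hwv, hvw⟩ := hΓ v
  exact kill_singleton_eq_of_mem_center hwv hvw hz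

theorem center_eq_bot_of_finite_out [Nontrivial V] [Finite (Out (RAAG Γ))] :
    Subgroup.center (RAAG Γ) = ⊥ := by
  refine center_eq_bot fun v ↦ ?_
  by_contra! hcone
  obtain ⟨w, hwv⟩ := exists_ne v
  exact not_neighborSet_subset_of_finite_out hwv fun u _ ↦ or_iff_not_imp_left.2 (hcone u)

end Center

section FreeProducts

open FreeProd Pointwise Monoid

variable {ι : Type*}

theorem exists_range_le_conj_smul_factor [Nontrivial V] (hΓ : Γ.Preconnected)
    {M : ι → Type*} [∀ i, Group (M i)] {φ : RAAG Γ →* CoprodI M} (hφ : Function.Injective φ) :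
    ∃ (i : ι) (g : CoprodI M), φ.range ≤ MulAut.conj g • factor M i := by
  have hne (u : V) : φ (gen Γ u) ≠ 1 := (map_ne_one_iff φ hφ).2 (gen_ne_one u)
  have hcomm {u w : V} (huw : Γ.Adj u w) : Commute (φ (gen Γ u)) (φ (gen Γ w)) :=
    (commutesOnAdj_gen huw).map φ
  obtain ⟨v, -⟩ := exists_pair_ne V
  obtain ⟨w, hvw⟩ := hΓ.exists_adj_of_nontrivial v
  have hell : IsElliptic (φ (gen Γ v)) := by
    refine (isElliptic_or_exists_zpow_eq_zpow_of_commute (hne v) (hne w) (hcomm hvw)).resolve_right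
      ?_
    rintro ⟨m, n, hm, hmn⟩
    rw [← map_zpow, ← map_zpow] at hmn
    exact hm (eq_zero_of_gen_zpow_eq_gen_zpow hvw.ne (hφ hmn))
  obtain ⟨g, i, hg⟩ := hell
  have hgen (u : V) : φ (gen Γ u) ∈ MulAut.conj g • factor M i := by
    induction (SimpleGraph.reachable_iff_reflTransGen v u).1 (hΓ v u) with
    | refl => exact hg
    | tail _ huw ih => exact mem_conj_smul_factor_of_commute ih (hne _) (hcomm huw)
  refine ⟨i, g, ?_⟩
  rw [MonoidHom.range_eq_map, ← closure_range_gen, MonoidHom.map_closure, Subgroup.closure_le]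
  rintro _ ⟨_, ⟨u, rfl⟩, rfl⟩
  exact hgen u

theorem autPermutesFactors {V : ι → Type*} [∀ i, Nontrivial (V i)] {Γ : ∀ i, SimpleGraph (V i)}
    (hΓ : ∀ i, (Γ i).Preconnected) : AutPermutesFactors fun i ↦ RAAG (Γ i) := by
  intro φ i
  obtain ⟨j, g, hle⟩ := exists_range_le_conj_smul_factor (hΓ i)
    (φ := φ.toMonoidHom.comp (CoprodI.of (M := fun i ↦ RAAG (Γ i)) (i := i)))
    (φ.injective.comp (CoprodI.of_injective i))
  refine ⟨j, g, ?_⟩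
  rwa [MonoidHom.range_comp] at hle

end FreeProducts

section DisjointUnion

open FreeProd Monoid

universe u

variable {V₁ V₂ : Type u}

/-- The two vertex types as a family over `Bool`. -/
abbrev pairVertex (V₁ V₂ : Type u) : Bool → Type u
  | false => V₁
  | true => V₂

/-- The two graphs as a family over `Bool`. -/
abbrev pairGraph (Γ₁ : SimpleGraph V₁) (Γ₂ : SimpleGraph V₂) :
    ∀ b, SimpleGraph (pairVertex V₁ V₂ b)
  | false => Γ₁
  | true => Γ₂

variable (Γ₁ : SimpleGraph V₁) (Γ₂ : SimpleGraph V₂)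

/-- The family over `Bool` of the two right-angled Artin groups. -/
abbrev PairRAAG (b : Bool) : Type u :=
  RAAG (pairGraph Γ₁ Γ₂ b)

theorem commutesOnAdj_gen_inl : CommutesOnAdj Γ₁ (gen (graphSum Γ₁ Γ₂) ∘ Sum.inl) :=
  fun v w h ↦ commutesOnAdj_gen (Γ := graphSum Γ₁ Γ₂) (v := .inl v) (w := .inl w) h

theorem commutesOnAdj_gen_inr : CommutesOnAdj Γ₂ (gen (graphSum Γ₁ Γ₂) ∘ Sum.inr) :=
  fun v w h ↦ commutesOnAdj_gen (Γ := graphSum Γ₁ Γ₂) (v := .inr v) (w := .inr w) h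

/-- The right-angled Artin group of one of the two graphs, mapped to that of the disjoint union. -/
def toGraphSum : ∀ b, PairRAAG Γ₁ Γ₂ b →* RAAG (graphSum Γ₁ Γ₂)
  | false => lift _ (commutesOnAdj_gen_inl Γ₁ Γ₂)
  | true => lift _ (commutesOnAdj_gen_inr Γ₁ Γ₂)

theorem toGraphSum_false_gen (v : V₁) :
    toGraphSum Γ₁ Γ₂ false (gen Γ₁ v) = gen (graphSum Γ₁ Γ₂) (Sum.inl v) :=
  lift_gen _ (commutesOnAdj_gen_inl Γ₁ Γ₂) v

theorem toGraphSum_true_gen (v : V₂) :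
    toGraphSum Γ₁ Γ₂ true (gen Γ₂ v) = gen (graphSum Γ₁ Γ₂) (Sum.inr v) :=
  lift_gen _ (commutesOnAdj_gen_inr Γ₁ Γ₂) v

/-- The generators of the two groups inside their free product. -/
def coprodGen : V₁ ⊕ V₂ → CoprodI (PairRAAG Γ₁ Γ₂) :=
  Sum.elim (fun v ↦ CoprodI.of (i := false) (gen Γ₁ v)) fun v ↦ CoprodI.of (i := true) (gen Γ₂ v)

theorem commutesOnAdj_coprodGen : CommutesOnAdj (graphSum Γ₁ Γ₂) (coprodGen Γ₁ Γ₂) := by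
  rintro (v | v) (w | w) h
  · exact (commutesOnAdj_gen (Γ := Γ₁) h).map (CoprodI.of (M := PairRAAG Γ₁ Γ₂) (i := false))
  · exact h.elim
  · exact h.elim
  · exact (commutesOnAdj_gen (Γ := Γ₂) h).map (CoprodI.of (M := PairRAAG Γ₁ Γ₂) (i := true))

/-- The right-angled Artin group of a disjoint union is the free product. -/
def coprodEquivGraphSum : CoprodI (PairRAAG Γ₁ Γ₂) ≃* RAAG (graphSum Γ₁ Γ₂) :=
  MonoidHom.toMulEquiv (CoprodI.lift (toGraphSum Γ₁ Γ₂))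
    (lift (coprodGen Γ₁ Γ₂) (commutesOnAdj_coprodGen Γ₁ Γ₂))
    (CoprodI.ext_hom _ _ fun
      | false => hom_ext (Γ := Γ₁) fun v ↦ by
          simp only [MonoidHom.comp_apply, CoprodI.lift_of, MonoidHom.id_apply]
          rw [toGraphSum_false_gen, lift_gen]
          rfl
      | true => hom_ext (Γ := Γ₂) fun v ↦ by
          simp only [MonoidHom.comp_apply, CoprodI.lift_of, MonoidHom.id_apply]
          rw [toGraphSum_true_gen, lift_gen]
          rfl)
    (hom_ext fun
      | Sum.inl v => by simpa [coprodGen] using toGraphSum_false_gen Γ₁ Γ₂ v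
      | Sum.inr v => by simpa [coprodGen] using toGraphSum_true_gen Γ₁ Γ₂ v)

/-- The product of the family of two right-angled Artin groups as a binary product. -/
def piEquivProd : (∀ b, PairRAAG Γ₁ Γ₂ b) ≃* RAAG Γ₁ × RAAG Γ₂ where
  toFun x := (x false, x true)
  invFun y := fun
    | false => y.1
    | true => y.2
  left_inv x := by
    funext b
    cases b <;> rfl
  right_inv _ := rfl
  map_mul' _ _ := rfl

end DisjointUnion

section FiniteOut

open FreeProd

theorem outPiConj_injective {ι : Type*} [Nontrivial ι] {V : ι → Type*} [∀ i, Nontrivial (V i)]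
    (Γ : ∀ i, SimpleGraph (V i)) [∀ i, Finite (Out (RAAG (Γ i)))] :
    Function.Injective (outPiConj fun i ↦ RAAG (Γ i)) :=
  FreeProd.outPiConj_injective fun _ ↦ center_eq_bot_of_finite_out

theorem finiteIndex_range_outPiConj {V : Bool → Type*} [∀ b, Nontrivial (V b)]
    (Γ : ∀ b, SimpleGraph (V b)) [∀ b, Finite (Out (RAAG (Γ b)))] :
    (outPiConj fun b ↦ RAAG (Γ b)).range.FiniteIndex :=
  FreeProd.finiteIndex_range_outPiConj (autPermutesFactors fun _ ↦ preconnected_of_finite_out)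

end FiniteOut

end RAAG

theorem out_raag_disjointUnion_has_finiteIndex_product_subgroup_general.{u}
    {V₁ V₂ : Type u} [Nontrivial V₁] [Nontrivial V₂]
    (Γ₁ : SimpleGraph V₁) (Γ₂ : SimpleGraph V₂)
    [Finite (Out (RAAG Γ₁))] [Finite (Out (RAAG Γ₂))] :
    ∃ H : Subgroup (Out (RAAG (graphSum Γ₁ Γ₂))), H.FiniteIndex ∧
      Nonempty (H ≃* (RAAG Γ₁ × RAAG Γ₂)) := by
  have (b : Bool) : Nontrivial (RAAG.pairVertex V₁ V₂ b) := by cases b <;> assumption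
  have (b : Bool) : Finite (Out (RAAG.PairRAAG Γ₁ Γ₂ b)) := by cases b <;> assumption
  let e := Out.congr (RAAG.coprodEquivGraphSum Γ₁ Γ₂)
  let Ψ := FreeProd.outPiConj (RAAG.PairRAAG Γ₁ Γ₂)
  have hΨ : Function.Injective (e.toMonoidHom.comp Ψ) :=
    e.injective.comp (RAAG.outPiConj_injective (RAAG.pairGraph Γ₁ Γ₂))
  have hindex : Ψ.range.FiniteIndex :=
    RAAG.finiteIndex_range_outPiConj (RAAG.pairGraph Γ₁ Γ₂)
  refine ⟨(e.toMonoidHom.comp Ψ).range, ⟨?_⟩,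
    ⟨(MonoidHom.ofInjective hΨ).symm.trans (RAAG.piEquivProd Γ₁ Γ₂)⟩⟩
  rw [MonoidHom.range_comp]
  exact (Subgroup.index_map_equiv Ψ.range e).trans_ne hindex.index_ne_zero

theorem out_raag_disjointUnion_has_finiteIndex_product_subgroup
    {V₁ V₂ : Type} [Fintype V₁] [Fintype V₂]
    (Γ₁ : SimpleGraph V₁) (Γ₂ : SimpleGraph V₂)
    (h₁ : 2 ≤ Fintype.card V₁) (h₂ : 2 ≤ Fintype.card V₂)
    (hf₁ : Finite (Out (RAAG Γ₁))) (hf₂ : Finite (Out (RAAG Γ₂))) :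
    ∃ H : Subgroup (Out (RAAG (graphSum Γ₁ Γ₂))), H.FiniteIndex ∧
      Nonempty (H ≃* (RAAG Γ₁ × RAAG Γ₂)) := by
  have := Fintype.one_lt_card_iff_nontrivial.1 h₁
  have := Fintype.one_lt_card_iff_nontrivial.1 h₂
  exact out_raag_disjointUnion_has_finiteIndex_product_subgroup_general Γ₁ Γ₂
end

section
/- Let Γ be a finite simple graph such that for every vertex u, any two vertices of Γ lying outside st(u) are connected by a path all of whose vertices lie outside st(u). If Γ has exactly two connected components, then for every vertex u the star st(u) equals the set of vertices in the connected component of u; that is, every vertex lying in the same connected component as u belongs to st(u). -/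
/-- The star of a vertex: the vertex together with its neighbours
(the link being the neighbour set `Γ.neighborSet u`). -/
def star {V : Type*} (Γ : SimpleGraph V) (u : V) : Set V :=
  insert u (Γ.neighborSet u)

/-- Any two vertices outside the star of `u` are connected by a path all of whose
vertices lie outside the star of `u`. -/
def connectedOutsideStar {V : Type*} (Γ : SimpleGraph V) (u : V) : Prop :=
  ∀ x y : {v : V // v ∉ star Γ u}, (Γ.induce {v : V | v ∉ star Γ u}).Reachable x y

section

variable {V : Type*} {Γ : SimpleGraph V} {u v w : V}

theorem reachable_of_mem_star (hv : v ∈ star Γ u) : Γ.Reachable u v := by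
  rcases hv with rfl | hadj
  · exact .rfl
  · exact SimpleGraph.Adj.reachable hadj

theorem exists_not_reachable (Γ : SimpleGraph V) [Nontrivial Γ.ConnectedComponent] (u : V) :
    ∃ w, ¬ Γ.Reachable u w := by
  obtain ⟨C, hC⟩ := exists_ne (Γ.connectedComponentMk u)
  obtain ⟨w, rfl⟩ := C.exists_rep
  exact ⟨w, fun huw => hC (SimpleGraph.ConnectedComponent.sound huw.symm)⟩

theorem connectedOutsideStar.reachable (h : connectedOutsideStar Γ u)
    (hv : v ∉ star Γ u) (hw : w ∉ star Γ u) : Γ.Reachable v w :=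
  (h ⟨v, hv⟩ ⟨w, hw⟩).map (SimpleGraph.Embedding.induce {x | x ∉ star Γ u}).toHom

theorem connectedOutsideStar.mem_star_of_reachable (h : connectedOutsideStar Γ u)
    (huw : ¬ Γ.Reachable u w) (huv : Γ.Reachable u v) : v ∈ star Γ u := by
  by_contra hv
  have hw : w ∉ star Γ u := mt reachable_of_mem_star huw
  exact huw (huv.trans (h.reachable hv hw))

theorem star_eq_component_of_two_components_general [Nontrivial Γ.ConnectedComponent]
    (h : connectedOutsideStar Γ u) : star Γ u = {v : V | Γ.Reachable u v} := by
  obtain ⟨w, huw⟩ := exists_not_reachable Γ u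
  exact Set.Subset.antisymm (fun _ => reachable_of_mem_star)
    (fun _ => h.mem_star_of_reachable huw)

end

theorem star_eq_component_of_two_components {V : Type} [Fintype V] (Γ : SimpleGraph V)
    (h : ∀ u : V, connectedOutsideStar Γ u)
    (h2 : Nat.card Γ.ConnectedComponent = 2) :
    ∀ u : V, star Γ u = {v : V | Γ.Reachable u v} := by
  have : Nontrivial Γ.ConnectedComponent := Finite.one_lt_card_iff_nontrivial.1 (by lia)
  exact fun u => star_eq_component_of_two_components_general (h u)
end
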